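/- Let N ≥ 1, let x_0, x_1, …, x_N be unit vectors in a real inner product space such that ⟨x_i, x_j⟩ ≤ 1 − δ for all i ≠ j, where 0 < δ < 2. Let 0 ≤ γ < 1 and let σ ≥ 0 satisfy σ² ≥ (1/δ) · log( N(1+γ)(2−δ) / (2(1−γ)) ). Then for every index i, (1 + γ) · Σ_{j ≠ i} |k_σ(x_i, x_j)| ≤ (1 − γ) · k_σ(x_i, x_i), where k_σ(x, x') = (1 + ⟨x, x'⟩) · exp(σ²(⟨x, x'⟩ − 1)). (This is the key inequality established in the proof of Theorem 1: under these hypotheses the NTK kernel matrix of the 2-layer LFF architecture satisfies the condition of Achiam et al. for the Bellman update to be a contraction.) -/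

import Mathlib

open scoped RealInnerProductSpace

/-- The 2-layer Fourier-feature NTK kernel `k_σ(x, x') = (1 + ⟪x, x'⟫) · exp(σ²(⟪x, x'⟫ − 1))`. -/
noncomputable def lffKernel {E : Type*} [NormedAddCommGroup E] [InnerProductSpace ℝ E]
    (σ : ℝ) (x x' : E) : ℝ :=
  (1 + ⟪x, x'⟫) * Real.exp (σ ^ 2 * (⟪x, x'⟫ - 1))

/-- Key inequality in the proof of Theorem 1: for `N + 1` unit vectors with pairwise inner
products at most `1 − δ` and `σ² ≥ (1/δ) · log(N(1+γ)(2−δ)/(2(1−γ)))`, the NTK kernel matrix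
satisfies Achiam et al.'s diagonal-dominance condition
`(1 + γ) · Σ_{j ≠ i} |k_σ(x_i, x_j)| ≤ (1 − γ) · k_σ(x_i, x_i)`. -/
theorem lff_bellman_contraction_condition {E : Type*} [NormedAddCommGroup E]
    [InnerProductSpace ℝ E] (N : ℕ) (hN : 1 ≤ N) (x : Fin (N + 1) → E)
    (hx : ∀ i, ‖x i‖ = 1) (δ : ℝ) (hδ0 : 0 < δ) (hδ2 : δ < 2)
    (hsep : ∀ i j, i ≠ j → ⟪x i, x j⟫ ≤ 1 - δ)
    (γ : ℝ) (hγ0 : 0 ≤ γ) (hγ1 : γ < 1) (σ : ℝ) (hσ0 : 0 ≤ σ)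
    (hσ : (1 / δ) * Real.log ((N : ℝ) * (1 + γ) * (2 - δ) / (2 * (1 - γ))) ≤ σ ^ 2) :
    ∀ i, (1 + γ) * ∑ j ∈ Finset.univ.erase i, |lffKernel σ (x i) (x j)|
      ≤ (1 - γ) * lffKernel σ (x i) (x i) := by
  intro i
  have hg : 0 < 1 - γ := by linarith
  have hN' : (0 : ℝ) < N := by exact_mod_cast hN
  have hd : 0 < 2 - δ := by linarith
  have hA : 0 < (N : ℝ) * (1 + γ) * (2 - δ) / (2 * (1 - γ)) := by positivity
  have hlog : Real.log ((N : ℝ) * (1 + γ) * (2 - δ) / (2 * (1 - γ))) ≤ σ ^ 2 * δ := by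
    rw [one_div, inv_mul_le_iff₀ hδ0] at hσ
    linarith
  have hexp := (Real.log_le_iff_le_exp hA).1 hlog
  rw [div_le_iff₀ (by positivity)] at hexp
  have hdiag : lffKernel σ (x i) (x i) = 2 := by
    simp only [lffKernel, real_inner_self_eq_norm_sq, hx]
    norm_num
  have hterm : ∀ j ∈ Finset.univ.erase i,
      |lffKernel σ (x i) (x j)| ≤ (2 - δ) * Real.exp (-(σ ^ 2 * δ)) := by
    intro j hj
    have h1 := hsep i j (Finset.ne_of_mem_erase hj).symm
    have h2 : -1 ≤ ⟪x i, x j⟫ := by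
      have := (abs_le.1 (abs_real_inner_le_norm (x i) (x j))).1
      simpa [hx] using this
    unfold lffKernel
    rw [abs_of_nonneg (mul_nonneg (by linarith) (Real.exp_pos _).le)]
    apply mul_le_mul (by linarith) _ (Real.exp_pos _).le hd.le
    apply Real.exp_le_exp.2
    nlinarith [sq_nonneg σ]
  have hsum := Finset.sum_le_card_nsmul _ _ _ hterm
  have hcard : (Finset.univ.erase i).card = N := by simp
  rw [hcard, nsmul_eq_mul] at hsum
  rw [hdiag]
  have hmul : Real.exp (σ ^ 2 * δ) * Real.exp (-(σ ^ 2 * δ)) = 1 := by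
    rw [← Real.exp_add]; simp
  calc _ ≤ (1 + γ) * ((N : ℝ) * ((2 - δ) * Real.exp (-(σ ^ 2 * δ)))) :=
        mul_le_mul_of_nonneg_left hsum (by linarith)
    _ = ((N : ℝ) * (1 + γ) * (2 - δ)) * Real.exp (-(σ ^ 2 * δ)) := by ring
    _ ≤ (Real.exp (σ ^ 2 * δ) * (2 * (1 - γ))) * Real.exp (-(σ ^ 2 * δ)) :=
        mul_le_mul_of_nonneg_right hexp (Real.exp_pos _).le
    _ = (Real.exp (σ ^ 2 * δ) * Real.exp (-(σ ^ 2 * δ))) * (2 * (1 - γ)) := by ring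
    _ = (1 - γ) * 2 := by rw [hmul]; ring
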